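/- Let F be a field and A an F-subalgebra of M_n(F) that does not satisfy the standard polynomial s_{2n-2}. Then there exists an invertible matrix Q ∈ M_n(F) and positive integers ℓ_1,...,ℓ_t with ℓ_1+...+ℓ_t = n such that Q A Q^{-1} = E_{(ℓ_1,...,ℓ_t)}(F), the full block upper triangular matrix algebra. -/

import Mathlib

open Matrix

/-- The standard polynomial `s_d` evaluated at `x : Fin d → R`. -/
noncomputable def stdPoly {R : Type*} [Ring R] (d : ℕ) (x : Fin d → R) : R :=
  ∑ σ : Equiv.Perm (Fin d), ((Equiv.Perm.sign σ : ℤˣ) : ℤ) • (List.ofFn fun i => x (σ i)).prod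

/-- `cum ℓ k` is `ℓ 0 + ⋯ + ℓ (k-1)`, the index where the `k`-th block starts. -/
def cum {t : ℕ} (ℓ : Fin t → ℕ) (k : ℕ) : ℕ :=
  ∑ i : Fin t, if (i : ℕ) < k then ℓ i else 0

/-- Block upper triangular with respect to the block sizes `ℓ`. -/
def BlockUT {F : Type*} [Field F] {t n : ℕ} (ℓ : Fin t → ℕ) (M : Matrix (Fin n) (Fin n) F) :
    Prop :=
  ∀ i j : Fin n, (∃ k : ℕ, (j : ℕ) < cum ℓ k ∧ cum ℓ k ≤ (i : ℕ)) → M i j = 0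

/-
Suppose that a ring `R` acts on an `n`-dimensional space `V` without satisfying `s_{2n-2}`. By the
Amitsur-Levitzki theorem a `d`-dimensional module satisfies `s_{2d}`, and the degrees add up along
a submodule, so every composition factor of dimension `d` fails `s_{2d-2}`, hence is absolutely
irreducible and carries the full algebra of its endomorphisms. The same count, applied to `V ⧸ N`
and `V ⧸ K` for disjoint submodules `N` and `K`, shows that `V` has only one minimal submodule `N`.

The crux is that `N` is isomorphic to no composition factor of `V ⧸ N`. Otherwise, for some
submodule of `V` in place of `V`, `R` acts in a suitable basis by block matrices
  [a x z]
  [0 b y]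
  [0 0 a]
of size `n`, and these satisfy `s_{2n-2}`: a tuple of matrices is encoded by a single matrix with
odd entries in an exterior algebra, whose `k`-th power has the values of `s_k` as coefficients, and
the repeated block `a` makes the relevant power of that matrix vanish. Hence some element of `R`
that acts on `V ⧸ N` as zero does not annihilate a given nonzero vector, and by duality `R` realizes
every operator with range in `N`. The theorem follows by induction, replacing `V` with `V ⧸ N`.
-/

section Adjugate

open Polynomial

variable {R m : Type*} [CommRing R] [Fintype m] [DecidableEq m]

theorem sum_det_updateCol_eq_trace_adjugate_mul (A B : Matrix m m R) :
    ∑ i, (A.updateCol i (B.col i)).det = (adjugate A * B).trace :=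
  Finset.sum_congr rfl fun i _ => by
    rw [← cramer_apply, cramer_eq_adjugate_mulVec]; rfl

theorem derivative_det (A : Matrix m m R[X]) :
    derivative A.det = (adjugate A * A.map derivative).trace := by
  simp only [← sum_det_updateCol_eq_trace_adjugate_mul, det_apply, derivative_sum, Units.smul_def,
    map_zsmul, derivative_prod_finset]
  rw [Finset.sum_comm]
  refine Finset.sum_congr rfl fun σ _ => ?_
  rw [Finset.smul_sum]
  refine Finset.sum_congr rfl fun i _ => ?_
  rw [← Finset.prod_erase_mul _ _ (Finset.mem_univ i)]
  congr 2
  · exact Finset.prod_congr rfl fun j hj => by rw [updateCol_ne (Finset.ne_of_mem_erase hj)]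
  · simp

theorem derivative_charpolyRev (M : Matrix m m R) :
    derivative M.charpolyRev =
      -(adjugate (1 - (X : R[X]) • M.map C) * M.map C).trace := by
  have map_derivative : (1 - (X : R[X]) • M.map C).map derivative = -M.map C := by
    ext i j
    by_cases h : i = j <;> simp [h, one_apply]
  rw [charpolyRev, derivative_det, map_derivative, mul_neg, trace_neg]

theorem charpolyRev_eq_one_of_trace_pow_eq_zero [IsAddTorsionFree R] {M : Matrix m m R}
    (hM : ∀ k, 0 < k → (M ^ k).trace = 0) : M.charpolyRev = 1 := by
  set B := adjugate (1 - (X : R[X]) • M.map C) with hB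
  have B_eq : B = M.charpolyRev • 1 + (X : R[X]) • (B * M.map C) := by
    rw [charpolyRev, ← adjugate_mul, ← hB, mul_sub, mul_one, Matrix.mul_smul,
      sub_add_cancel]
  have trace_B_mul (k : ℕ) :
      (B * M.map C ^ (k + 1)).trace = X * (B * M.map C ^ (k + 2)).trace := by
    have trace_map : (M.map (C : R →+* R[X]) ^ (k + 1)).trace = 0 := by
      rw [← Matrix.map_pow, ← AddMonoidHom.map_trace, hM _ k.succ_pos, map_zero]
    conv_lhs => rw [B_eq]
    rw [add_mul, smul_mul_assoc, one_mul, smul_mul_assoc, mul_assoc, ← pow_succ', trace_add,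
      trace_smul, trace_smul, trace_map, smul_zero, zero_add, smul_eq_mul]
  have X_pow_dvd (N : ℕ) : ∀ k, X ^ N ∣ (B * M.map C ^ (k + 1)).trace := by
    induction N with
    | zero => simp
    | succ N ih =>
      intro k
      rw [trace_B_mul, pow_succ']
      exact mul_dvd_mul_left X (ih _)
  have derivative_eq_zero : derivative M.charpolyRev = 0 := by
    rw [derivative_charpolyRev, neg_eq_zero]
    ext n
    simpa only [zero_add, pow_one, coeff_zero] using
      X_pow_dvd_iff.1 (X_pow_dvd (n + 1) 0) n n.lt_succ_self
  rw [eq_C_of_derivative_eq_zero derivative_eq_zero, coeff_zero_eq_eval_zero, eval_charpolyRev,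
    C_1]

theorem charpoly_eq_X_pow_of_trace_pow_eq_zero [IsAddTorsionFree R] {M : Matrix m m R}
    (hM : ∀ k, 0 < k → (M ^ k).trace = 0) : M.charpoly = X ^ Fintype.card m := by
  nontriviality R
  have reverse_eq_one : M.charpoly.reverse = 1 := by
    rw [reverse_charpoly, charpolyRev_eq_one_of_trace_pow_eq_zero hM]
  rw [← M.charpoly_natDegree_eq_dim, ← reflect_one, ← reverse_eq_one, reverse]
  ext n
  simp only [coeff_reflect, revAt_invol]

theorem pow_card_eq_zero_of_charpoly {M : Matrix m m R} (hM : M.charpoly = X ^ Fintype.card m) :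
    M ^ Fintype.card m = 0 := by
  simpa only [hM, map_pow, aeval_X] using aeval_self_charpoly M

theorem adjugate_neg_eq_pow_of_charpoly {M : Matrix m m R} {p : ℕ} (hm : Fintype.card m = p + 1)
    (hM : M.charpoly = X ^ Fintype.card m) : adjugate (-M) = M ^ p := by
  set G := ∑ i ∈ Finset.range (p + 1), scalar m (X : R[X]) ^ i * C.mapMatrix M ^ (p - i) with hG
  have G_mul_charmatrix : G * charmatrix M = (X ^ (p + 1) : R[X]) • 1 := by
    have commute : Commute (scalar m (X : R[X])) (C.mapMatrix M) :=
      scalar_commute _ (fun _ => Commute.all _ _) _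
    have M_pow : M ^ (p + 1) = 0 := hm ▸ pow_card_eq_zero_of_charpoly hM
    have geom_sum := commute.geom_sum₂_mul (p + 1)
    rw [← map_pow C.mapMatrix, M_pow, map_zero, sub_zero, ← map_pow, add_tsub_cancel_right]
      at geom_sum
    rw [hG, charmatrix, geom_sum, scalar_apply, ← smul_one_eq_diagonal]
  have G_eq_adjugate : G = adjugate (charmatrix M) := by
    have smul_eq : (X ^ (p + 1) : R[X]) • G = (X ^ (p + 1) : R[X]) • adjugate (charmatrix M) := by
      calc (X ^ (p + 1) : R[X]) • G = G * (charmatrix M * adjugate (charmatrix M)) := by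
            rw [mul_adjugate, ← charpoly, hM, hm, Matrix.mul_smul, mul_one]
        _ = _ := by rw [← mul_assoc, G_mul_charmatrix, smul_mul_assoc, one_mul]
    ext i j n
    simpa [Matrix.smul_apply, coeff_X_pow_mul] using
      congrArg (coeff · (n + (p + 1))) (congrFun (congrFun smul_eq i) j)
  have eval_G : (evalRingHom (0 : R)).mapMatrix G = M ^ p := by
    have eval_C : (evalRingHom (0 : R)).mapMatrix (C.mapMatrix M) = M := by
      ext
      simp
    have eval_scalar : (evalRingHom (0 : R)).mapMatrix (scalar m (X : R[X])) = 0 := by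
      ext i j
      by_cases h : i = j <;> simp [h]
    simp only [hG, map_sum, map_mul, map_pow, eval_C, eval_scalar, zero_pow_eq, ite_mul, one_mul,
      zero_mul, Finset.sum_ite_eq', Finset.mem_range, Nat.succ_pos, if_true, tsub_zero]
  have eval_charmatrix : (evalRingHom (0 : R)).mapMatrix (charmatrix M) = -M := by
    ext i j
    by_cases h : i = j <;> simp [h]
  rw [← eval_charmatrix, ← RingHom.map_adjugate, ← G_eq_adjugate, eval_G]

omit [DecidableEq m] in
theorem map_derivative_mul (A B : Matrix m m R[X]) :
    (A * B).map derivative = A.map derivative * B + A * B.map derivative := by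
  ext1 i j
  simp only [map_apply, Matrix.mul_apply, Matrix.add_apply, derivative_sum, derivative_mul,
    Finset.sum_add_distrib]

theorem adjugate_mul_mul_adjugate_of_det_eq_zero {M : Matrix m m R} (hM : M.det = 0)
    (W : Matrix m m R) :
    adjugate M * W * adjugate M = (adjugate M * W).trace • adjugate M := by
  -- Compare the coefficients of `X` in `adjugate N * N = det N` for `N = M + X • W`.
  set N : Matrix m m R[X] := M.map C + (X : R[X]) • W.map C with hN
  let ev : Matrix m m R[X] →+* Matrix m m R := (evalRingHom (0 : R)).mapMatrix
  have ev_N : ev N = M := by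
    ext
    simp [ev, hN]
  have map_derivative_N : N.map derivative = W.map C := by
    ext1 i j
    simp [hN]
  have ev_W : ev (W.map C) = W := by
    ext
    simp [ev]
  have ev_adjugate : ev (adjugate N) = adjugate M := by
    rw [RingHom.map_adjugate, ev_N]
  have ev_derivative_det : eval 0 (derivative N.det) = (adjugate M * W).trace := by
    rw [derivative_det, map_derivative_N, ← coe_evalRingHom, AddMonoidHom.map_trace,
      ← RingHom.mapMatrix_apply, map_mul, ev_W, ev_adjugate]
  have derivative_adjugate_mul : (adjugate N).map derivative * N + adjugate N * W.map C =
      derivative N.det • (1 : Matrix m m R[X]) := by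
    rw [← map_derivative_N, ← map_derivative_mul, adjugate_mul]
    ext1 i j
    by_cases h : i = j <;> simp [h]
  have ev_derivative : ev ((adjugate N).map derivative) * M + adjugate M * W =
      (adjugate M * W).trace • (1 : Matrix m m R) := by
    have := congrArg ev derivative_adjugate_mul
    rw [map_add, map_mul, map_mul, ev_N, ev_W, ev_adjugate] at this
    rw [this, ← ev_derivative_det]
    ext1 i j
    by_cases h : i = j <;> simp [ev, h]
  have := congrArg (· * adjugate M) ev_derivative
  simpa [add_mul, mul_assoc, mul_adjugate, hM] using this

theorem adjugate_apply_mul_adjugate_apply_of_det_eq_zero {M : Matrix m m R} (hM : M.det = 0)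
    (i j k l : m) :
    adjugate M i k * adjugate M l j = adjugate M l k * adjugate M i j := by
  have := congrFun₂ (adjugate_mul_mul_adjugate_of_det_eq_zero hM (single k l 1)) i j
  rw [trace_mul_single, MulOpposite.op_one, one_smul] at this
  simpa [mul_single_eq_updateCol_zero, Matrix.mul_apply, updateCol_apply, ite_mul] using this

end Adjugate

/-- A `ZMod 2`-grading is supercommutative if even elements are central and odd elements
anticommute. Unlike the usual notion this does not ask odd elements to square to zero. -/
structure IsSupercommutative {G σ : Type*} [Ring G] [SetLike σ G] (𝒢 : ZMod 2 → σ) : Prop where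
  commute_of_even : ∀ {a : G}, a ∈ 𝒢 0 → ∀ b, Commute a b
  mul_eq_neg_mul_of_odd : ∀ {a b : G}, a ∈ 𝒢 1 → b ∈ 𝒢 1 → a * b = -(b * a)

/-- A matrix over a graded ring is homogeneous of degree `i` if all its entries are. -/
def IsHomogeneousMatrix {ι G σ l m : Type*} [SetLike σ G] (𝒢 : ι → σ) (i : ι)
    (M : Matrix l m G) : Prop :=
  ∀ r s, M r s ∈ 𝒢 i

namespace IsHomogeneousMatrix

variable {ι G σ l m n : Type*} [Ring G] [SetLike σ G] [AddSubgroupClass σ G] {𝒢 : ι → σ}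

theorem mul [Add ι] [SetLike.GradedMul 𝒢] [Fintype m] {i j : ι} {M : Matrix l m G}
    {N : Matrix m n G} (hM : IsHomogeneousMatrix 𝒢 i M) (hN : IsHomogeneousMatrix 𝒢 j N) :
    IsHomogeneousMatrix 𝒢 (i + j) (M * N) := fun r s =>
  sum_mem fun k _ => SetLike.mul_mem_graded (hM r k) (hN k s)

theorem pow [AddMonoid ι] [SetLike.GradedMonoid 𝒢] [Fintype m] [DecidableEq m] {i : ι}
    {M : Matrix m m G} (hM : IsHomogeneousMatrix 𝒢 i M) (k : ℕ) :
    IsHomogeneousMatrix 𝒢 (k • i) (M ^ k) := by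
  induction k with
  | zero =>
    intro r s
    rw [pow_zero, zero_smul, one_apply]
    split_ifs
    exacts [SetLike.one_mem_graded 𝒢, zero_mem _]
  | succ k ih => simpa only [pow_succ, succ_nsmul] using ih.mul hM

theorem trace_mem [Fintype m] {i : ι} {M : Matrix m m G} (hM : IsHomogeneousMatrix 𝒢 i M) :
    M.trace ∈ 𝒢 i :=
  sum_mem fun k _ => hM k k

theorem pow_two_mul {𝒢 : ZMod 2 → σ} [SetLike.GradedMonoid 𝒢] [Fintype m] [DecidableEq m]
    {M : Matrix m m G} (hM : IsHomogeneousMatrix 𝒢 1 M) (k : ℕ) :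
    IsHomogeneousMatrix 𝒢 0 (M ^ (2 * k)) := by
  simpa [show (2 : ZMod 2) = 0 from rfl] using hM.pow (2 * k)

end IsHomogeneousMatrix

namespace IsSupercommutative

variable {G σ m : Type*} [Ring G] [SetLike σ G] {𝒢 : ZMod 2 → σ}
  [Fintype m]

theorem trace_mul_eq_neg_of_odd (h𝒢 : IsSupercommutative 𝒢) {a b : Matrix m m G}
    (ha : IsHomogeneousMatrix 𝒢 1 a) (hb : IsHomogeneousMatrix 𝒢 1 b) :
    (a * b).trace = -(b * a).trace := by
  simp only [trace, diag_apply, Matrix.mul_apply, ← Finset.sum_neg_distrib]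
  rw [Finset.sum_comm]
  exact Finset.sum_congr rfl fun i _ => Finset.sum_congr rfl fun j _ =>
    h𝒢.mul_eq_neg_mul_of_odd (ha j i) (hb i j)

theorem mul_smul_of_even (h𝒢 : IsSupercommutative 𝒢) {t : G} (ht : t ∈ 𝒢 0)
    (a b : Matrix m m G) : a * t • b = t • (a * b) := by
  ext i j
  simp only [Matrix.mul_apply, Matrix.smul_apply, smul_eq_mul, Finset.mul_sum]
  exact Finset.sum_congr rfl fun k _ => (h𝒢.commute_of_even ht (a i k)).symm.left_comm _

theorem mul_smul_of_odd (h𝒢 : IsSupercommutative 𝒢) {t : G} (ht : t ∈ 𝒢 1)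
    {a : Matrix m m G} (ha : IsHomogeneousMatrix 𝒢 1 a) (b : Matrix m m G) :
    a * t • b = -(t • (a * b)) := by
  ext i j
  simp only [Matrix.mul_apply, Matrix.smul_apply, Matrix.neg_apply, smul_eq_mul, Finset.mul_sum,
    ← Finset.sum_neg_distrib]
  refine Finset.sum_congr rfl fun k _ => ?_
  rw [← mul_assoc, h𝒢.mul_eq_neg_mul_of_odd (ha i k) ht, neg_mul, mul_assoc]

theorem mul_smul_mul_eq_zero {i : ZMod 2} (h𝒢 : IsSupercommutative 𝒢) {a b c : Matrix m m G}
    (ha : IsHomogeneousMatrix 𝒢 1 a) {t : G} (ht : t ∈ 𝒢 i) (habc : a * b * c = 0) :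
    a * t • b * c = 0 := by
  obtain rfl | rfl : i = 0 ∨ i = 1 := (by decide : ∀ i : ZMod 2, i = 0 ∨ i = 1) i
  · rw [h𝒢.mul_smul_of_even ht, smul_mul_assoc, habc, smul_zero]
  · rw [h𝒢.mul_smul_of_odd ht ha, neg_mul, smul_mul_assoc, habc, smul_zero, neg_zero]

variable [DecidableEq m]

theorem exists_map_center_eq (h𝒢 : IsSupercommutative 𝒢) {a : Matrix m m G}
    (ha : IsHomogeneousMatrix 𝒢 0 a) :
    ∃ M : Matrix m m (Subring.center G), (Subring.center G).subtype.mapMatrix M = a :=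
  ⟨of fun i j => ⟨a i j, Subring.mem_center_iff.2 fun b =>
    (h𝒢.commute_of_even (ha i j) b).symm⟩, rfl⟩

variable [AddSubgroupClass σ G] [SetLike.GradedMonoid 𝒢]

theorem trace_pow_eq_zero_of_odd [IsAddTorsionFree G] (h𝒢 : IsSupercommutative 𝒢)
    {a : Matrix m m G} (ha : IsHomogeneousMatrix 𝒢 1 a) {k : ℕ} (hk : 0 < k) :
    (a ^ (2 * k)).trace = 0 := by
  obtain ⟨k, rfl⟩ := Nat.exists_eq_add_of_lt hk
  have ha' : IsHomogeneousMatrix 𝒢 1 (a ^ (2 * k + 1)) := by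
    simpa only [pow_succ, zero_add] using (ha.pow_two_mul k).mul ha
  have := h𝒢.trace_mul_eq_neg_of_odd ha ha'
  rw [← pow_succ', ← pow_succ] at this
  rw [zero_add, mul_add, mul_one]
  exact self_eq_neg.1 this

open Polynomial in
theorem exists_map_center_eq_sq [IsAddTorsionFree G] (h𝒢 : IsSupercommutative 𝒢)
    {a : Matrix m m G} (ha : IsHomogeneousMatrix 𝒢 1 a) :
    ∃ M : Matrix m m (Subring.center G),
      (Subring.center G).subtype.mapMatrix M = a ^ 2 ∧ M.charpoly = X ^ Fintype.card m := by
  have ha2 : IsHomogeneousMatrix 𝒢 0 (a ^ 2) := ha.pow_two_mul 1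
  obtain ⟨M, hM⟩ := h𝒢.exists_map_center_eq ha2
  have : IsAddTorsionFree (Subring.center G) :=
    Function.Injective.isAddTorsionFree (Subring.center G).subtype.toAddMonoidHom
      Subtype.val_injective
  refine ⟨M, hM, charpoly_eq_X_pow_of_trace_pow_eq_zero fun k hk => Subtype.ext ?_⟩
  have map_trace := AddMonoidHom.map_trace (Subring.center G).subtype (M ^ k)
  rwa [← RingHom.mapMatrix_apply, map_pow, hM, ← pow_mul, h𝒢.trace_pow_eq_zero_of_odd ha hk]
    at map_trace

theorem pow_two_mul_card_eq_zero_of_odd [IsAddTorsionFree G] (h𝒢 : IsSupercommutative 𝒢)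
    {a : Matrix m m G} (ha : IsHomogeneousMatrix 𝒢 1 a) : a ^ (2 * Fintype.card m) = 0 := by
  obtain ⟨M, hM, hM_charpoly⟩ := h𝒢.exists_map_center_eq_sq ha
  rw [pow_mul, ← hM, ← map_pow, pow_card_eq_zero_of_charpoly hM_charpoly, map_zero]

theorem pow_two_mul_add_two_eq_zero_of_odd [IsAddTorsionFree G] (h𝒢 : IsSupercommutative 𝒢)
    {a : Matrix m m G} (ha : IsHomogeneousMatrix 𝒢 1 a) {p : ℕ} (hm : Fintype.card m = p + 1) :
    a ^ (2 * p + 2) = 0 := by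
  rw [← h𝒢.pow_two_mul_card_eq_zero_of_odd ha, hm, mul_add]

theorem pow_mul_mul_pow_eq_trace_smul_of_odd [IsAddTorsionFree G] (h𝒢 : IsSupercommutative 𝒢)
    {a : Matrix m m G} (ha : IsHomogeneousMatrix 𝒢 1 a) {p : ℕ} (hm : Fintype.card m = p + 1)
    (W : Matrix m m G) :
    a ^ (2 * p) * W * a ^ (2 * p) = (W * a ^ (2 * p)).trace • a ^ (2 * p) := by
  obtain ⟨M, hM, hM_charpoly⟩ := h𝒢.exists_map_center_eq_sq ha
  have det_neg : (-M).det = 0 := by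
    rw [det_neg, det_eq_sign_charpoly_coeff, hM_charpoly]
    simp [hm]
  have M_pow (i j k l : m) : (M ^ p) i k * (M ^ p) l j = (M ^ p) l k * (M ^ p) i j := by
    simpa only [adjugate_neg_eq_pow_of_charpoly hm hM_charpoly] using
      adjugate_apply_mul_adjugate_apply_of_det_eq_zero det_neg i j k l
  have pow_eq : a ^ (2 * p) = (Subring.center G).subtype.mapMatrix (M ^ p) := by
    rw [pow_mul, ← hM, map_pow]
  ext i j
  simp only [pow_eq, Matrix.mul_apply, Matrix.smul_apply, smul_eq_mul, trace, diag_apply,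
    Finset.sum_mul]
  rw [Finset.sum_comm]
  refine Finset.sum_congr rfl fun k _ => Finset.sum_congr rfl fun l _ => ?_
  change ((M ^ p) i k : G) * W k l * (M ^ p) l j = W k l * (M ^ p) l k * (M ^ p) i j
  rw [← Subring.mem_center_iff.1 ((M ^ p) i k).2 (W k l), mul_assoc, mul_assoc]
  rw [← Subring.coe_mul, M_pow, Subring.coe_mul]

theorem pow_mul_mul_pow_eq_zero_of_odd [IsAddTorsionFree G] (h𝒢 : IsSupercommutative 𝒢)
    {a : Matrix m m G} (ha : IsHomogeneousMatrix 𝒢 1 a) {p : ℕ} (hm : Fintype.card m = p + 1)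
    {i : ZMod 2} {W : Matrix m m G} (hW : IsHomogeneousMatrix 𝒢 i W) :
    a ^ (2 * p + 1) * W * a ^ (2 * p + 1) = 0 := by
  have a_pow : a * a ^ (2 * p) * a = 0 := by
    rw [← pow_succ', ← pow_succ, h𝒢.pow_two_mul_add_two_eq_zero_of_odd ha hm]
  calc a ^ (2 * p + 1) * W * a ^ (2 * p + 1)
      = a * (a ^ (2 * p) * W * a ^ (2 * p)) * a := by
        nth_rewrite 1 [pow_succ']
        simp only [pow_succ, mul_assoc]
    _ = 0 := by
        rw [h𝒢.pow_mul_mul_pow_eq_trace_smul_of_odd ha hm,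
          h𝒢.mul_smul_mul_eq_zero ha (hW.mul (ha.pow_two_mul p)).trace_mem a_pow]

theorem pow_mul_odd_mul_pow_add_eq_zero [IsAddTorsionFree G] (h𝒢 : IsSupercommutative 𝒢)
    {a T : Matrix m m G} (ha : IsHomogeneousMatrix 𝒢 1 a) (hT : IsHomogeneousMatrix 𝒢 1 T)
    {p : ℕ} (hm : Fintype.card m = p + 1) :
    a ^ (2 * p) * T * a ^ (2 * p + 1) + a ^ (2 * p + 1) * T * a ^ (2 * p) = 0 := by
  have A_even : IsHomogeneousMatrix 𝒢 0 (a ^ (2 * p)) := ha.pow_two_mul p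
  have trace_odd : (T * a ^ (2 * p)).trace ∈ 𝒢 1 := by
    simpa only [add_zero] using (hT.mul A_even).trace_mem
  calc a ^ (2 * p) * T * a ^ (2 * p + 1) + a ^ (2 * p + 1) * T * a ^ (2 * p)
      = (a ^ (2 * p) * T * a ^ (2 * p)) * a + a * (a ^ (2 * p) * T * a ^ (2 * p)) := by
        rw [pow_succ, ← mul_assoc, ← pow_succ, pow_succ']
        simp only [mul_assoc]
    _ = 0 := by
        rw [h𝒢.pow_mul_mul_pow_eq_trace_smul_of_odd ha hm, h𝒢.mul_smul_of_odd trace_odd ha,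
          smul_mul_assoc, ← pow_succ, ← pow_succ', add_neg_cancel]

end IsSupercommutative

section LinkMatrix

open Finset.HasAntidiagonal (antidiagonal mem_antidiagonal)

variable {G l n : Type*} [Ring G] [Fintype l] [Fintype n] [DecidableEq l] [DecidableEq n]

/-- The sum of all products `a ^ i * w * b ^ j` with `i + j = N`. -/
def sandwichSum (a : Matrix l l G) (w : Matrix l n G) (b : Matrix n n G) (N : ℕ) :
    Matrix l n G :=
  ∑ ij ∈ antidiagonal N, a ^ ij.1 * w * b ^ ij.2

theorem sandwichSum_zero (a : Matrix l l G) (w : Matrix l n G) (b : Matrix n n G) :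
    sandwichSum a w b 0 = w := by
  simp [sandwichSum]

theorem sandwichSum_succ (a : Matrix l l G) (w : Matrix l n G) (b : Matrix n n G) (N : ℕ) :
    sandwichSum a w b (N + 1) = w * b ^ (N + 1) + a * sandwichSum a w b N := by
  simp only [sandwichSum, Finset.Nat.sum_antidiagonal_succ, pow_zero, Matrix.one_mul, pow_succ',
    Matrix.mul_sum, Matrix.mul_assoc]

theorem sandwichSum_eq_zero {a : Matrix l l G} {w : Matrix l n G} {b : Matrix n n G} {s t N : ℕ}
    (ha : a ^ s = 0) (hb : b ^ t = 0) (hN : s + t ≤ N + 1) : sandwichSum a w b N = 0 :=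
  Finset.sum_eq_zero fun ij hij => by
    have := mem_antidiagonal.1 hij
    obtain h | h : s ≤ ij.1 ∨ t ≤ ij.2 := by lia
    · rw [pow_eq_zero_of_le h ha, Matrix.zero_mul, Matrix.zero_mul]
    · rw [pow_eq_zero_of_le h hb, Matrix.mul_zero]

/-- The block upper triangular matrices whose first and last diagonal blocks coincide, on the
index type `(l ⊕ n) ⊕ l`. They describe the action of a ring on a module that has a submodule
and a quotient isomorphic to each other. -/
def linkMatrix (a : Matrix l l G) (b : Matrix n n G) (x : Matrix l n G) (y : Matrix n l G)
    (z : Matrix l l G) : Matrix ((l ⊕ n) ⊕ l) ((l ⊕ n) ⊕ l) G :=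
  fromBlocks (fromBlocks a x 0 b) (fromRows z y) 0 a

omit [DecidableEq l] [DecidableEq n] in
theorem linkMatrix_mul (a a' : Matrix l l G) (b b' : Matrix n n G) (x x' : Matrix l n G)
    (y y' : Matrix n l G) (z z' : Matrix l l G) :
    linkMatrix a b x y z * linkMatrix a' b' x' y' z' =
      linkMatrix (a * a') (b * b') (a * x' + x * b') (b * y' + y * a')
        (a * z' + x * y' + z * a') := by
  simp only [linkMatrix, fromBlocks_multiply, fromBlocks_mul_fromRows, fromRows_mul]
  congr 1
  · simp
  · ext i j
    cases i <;> simp [add_assoc]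
  · simp
  · rw [Matrix.zero_mul, zero_add]

/-- The homogeneous parts of the corner: every path from the last to the first block of a power
of `linkMatrix a b x y z` reads `a ^ i * linkBridge b x y z k * a ^ j`. -/
def linkBridge (b : Matrix n n G) (x : Matrix l n G) (y : Matrix n l G) (z : Matrix l l G) :
    ℕ → Matrix l l G
  | 0 => z
  | k + 1 => x * b ^ k * y

theorem sum_linkBridge_mul_pow (a : Matrix l l G) (b : Matrix n n G) (x : Matrix l n G)
    (y : Matrix n l G) (z : Matrix l l G) (N : ℕ) :
    ∑ kj ∈ antidiagonal (N + 1), linkBridge b x y z kj.1 * a ^ kj.2 =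
      x * sandwichSum b y a N + z * a ^ (N + 1) := by
  simp only [Finset.Nat.sum_antidiagonal_succ, linkBridge, sandwichSum, Matrix.mul_sum,
    Matrix.mul_assoc, add_comm]

theorem sum_sandwichSum_linkBridge_succ (a : Matrix l l G) (b : Matrix n n G) (x : Matrix l n G)
    (y : Matrix n l G) (z : Matrix l l G) (N : ℕ) :
    ∑ km ∈ antidiagonal (N + 1), sandwichSum a (linkBridge b x y z km.1) a km.2 =
      a * ∑ km ∈ antidiagonal N, sandwichSum a (linkBridge b x y z km.1) a km.2 +
        x * sandwichSum b y a N + z * a ^ (N + 1) := by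
  rw [add_assoc, ← sum_linkBridge_mul_pow, Finset.Nat.sum_antidiagonal_succ',
    Finset.Nat.sum_antidiagonal_succ']
  simp only [sandwichSum_succ, sandwichSum_zero, Finset.sum_add_distrib, Matrix.mul_sum,
    pow_zero, Matrix.mul_one]
  abel

theorem linkMatrix_pow_succ (a : Matrix l l G) (b : Matrix n n G) (x : Matrix l n G)
    (y : Matrix n l G) (z : Matrix l l G) (N : ℕ) :
    linkMatrix a b x y z ^ (N + 1) =
      linkMatrix (a ^ (N + 1)) (b ^ (N + 1)) (sandwichSum a x b N) (sandwichSum b y a N)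
        (∑ km ∈ antidiagonal N, sandwichSum a (linkBridge b x y z km.1) a km.2) := by
  induction N with
  | zero => simp [sandwichSum_zero, linkBridge]
  | succ N ih =>
    rw [pow_succ', ih, linkMatrix_mul, sandwichSum_succ a x, sandwichSum_succ b y,
      sum_sandwichSum_linkBridge_succ, ← pow_succ', ← pow_succ', add_comm (a * _),
      add_comm (b * _)]

end LinkMatrix

namespace IsSupercommutative

open Finset.HasAntidiagonal (antidiagonal mem_antidiagonal)

variable {G σ l n : Type*} [Ring G] [SetLike σ G] {𝒢 : ZMod 2 → σ} [AddSubgroupClass σ G]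
  [SetLike.GradedMonoid 𝒢] [Fintype l] [Fintype n] [DecidableEq l] [DecidableEq n]
  [IsAddTorsionFree G]

theorem sandwichSum_eq_zero_of_le (h𝒢 : IsSupercommutative 𝒢) {a : Matrix l l G}
    (ha : IsHomogeneousMatrix 𝒢 1 a) {p : ℕ} (hl : Fintype.card l = p + 1) {i : ZMod 2}
    {W : Matrix l l G} (hW : IsHomogeneousMatrix 𝒢 i W) {N : ℕ} (hN : 4 * p + 2 ≤ N) :
    sandwichSum a W a N = 0 := by
  have a_pow : a ^ (2 * p + 2) = 0 := h𝒢.pow_two_mul_add_two_eq_zero_of_odd ha hl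
  refine Finset.sum_eq_zero fun ij hij => ?_
  have := mem_antidiagonal.1 hij
  obtain h | h | ⟨h₁, h₂⟩ :
      2 * p + 2 ≤ ij.1 ∨ 2 * p + 2 ≤ ij.2 ∨ ij.1 = 2 * p + 1 ∧ ij.2 = 2 * p + 1 := by lia
  · rw [pow_eq_zero_of_le h a_pow, zero_mul, zero_mul]
  · rw [pow_eq_zero_of_le h a_pow, mul_zero]
  · rw [h₁, h₂, h𝒢.pow_mul_mul_pow_eq_zero_of_odd ha hl hW]

theorem sandwichSum_eq_zero_of_odd (h𝒢 : IsSupercommutative 𝒢) {a T : Matrix l l G}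
    (ha : IsHomogeneousMatrix 𝒢 1 a) (hT : IsHomogeneousMatrix 𝒢 1 T) {p : ℕ}
    (hl : Fintype.card l = p + 1) :
    sandwichSum a T a (4 * p + 1) = 0 := by
  have a_pow : a ^ (2 * p + 2) = 0 := h𝒢.pow_two_mul_add_two_eq_zero_of_odd ha hl
  have sum_pair : sandwichSum a T a (4 * p + 1) =
      ∑ ij ∈ {(2 * p, 2 * p + 1), (2 * p + 1, 2 * p)}, a ^ ij.1 * T * a ^ ij.2 := by
    symm
    refine Finset.sum_subset (fun ij hij => ?_) fun ij hij hne => ?_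
    · simp only [Finset.mem_insert, Finset.mem_singleton] at hij
      rcases hij with rfl | rfl <;> exact mem_antidiagonal.2 (by lia)
    · have := mem_antidiagonal.1 hij
      simp only [Finset.mem_insert, Finset.mem_singleton, Prod.ext_iff] at hne
      obtain h | h : 2 * p + 2 ≤ ij.1 ∨ 2 * p + 2 ≤ ij.2 := by lia
      · rw [pow_eq_zero_of_le h a_pow, zero_mul, zero_mul]
      · rw [pow_eq_zero_of_le h a_pow, mul_zero]
  rw [sum_pair, Finset.sum_pair (by simp), h𝒢.pow_mul_odd_mul_pow_add_eq_zero ha hT hl]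

omit [Fintype l] [IsAddTorsionFree G] [DecidableEq l] in
theorem isHomogeneousMatrix_linkBridge {b : Matrix n n G} {x : Matrix l n G}
    {y : Matrix n l G} {z : Matrix l l G} (hb : IsHomogeneousMatrix 𝒢 1 b)
    (hx : IsHomogeneousMatrix 𝒢 1 x) (hy : IsHomogeneousMatrix 𝒢 1 y)
    (hz : IsHomogeneousMatrix 𝒢 1 z) :
    ∀ k : ℕ, IsHomogeneousMatrix 𝒢 (k + 1) (linkBridge b x y z k)
  | 0 => by simpa [linkBridge] using hz
  | k + 1 => by simpa [linkBridge, add_comm] using (hx.mul (hb.pow k)).mul hy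

theorem linkMatrix_pow_eq_zero (h𝒢 : IsSupercommutative 𝒢) {a : Matrix l l G} {b : Matrix n n G}
    {x : Matrix l n G} {y : Matrix n l G} {z : Matrix l l G} (ha : IsHomogeneousMatrix 𝒢 1 a)
    (hb : IsHomogeneousMatrix 𝒢 1 b) (hx : IsHomogeneousMatrix 𝒢 1 x)
    (hy : IsHomogeneousMatrix 𝒢 1 y) (hz : IsHomogeneousMatrix 𝒢 1 z) {p : ℕ}
    (hl : Fintype.card l = p + 1) :
    linkMatrix a b x y z ^ (4 * p + 2 * Fintype.card n + 2) = 0 := by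
  set q := Fintype.card n
  have a_pow : a ^ (2 * p + 2) = 0 := h𝒢.pow_two_mul_add_two_eq_zero_of_odd ha hl
  have b_pow : b ^ (2 * q) = 0 := h𝒢.pow_two_mul_card_eq_zero_of_odd hb
  have bridge := isHomogeneousMatrix_linkBridge hb hx hy hz
  have corner : ∑ km ∈ antidiagonal (4 * p + 2 * q + 1),
      sandwichSum a (linkBridge b x y z km.1) a km.2 = 0 := by
    refine Finset.sum_eq_zero fun km hkm => ?_
    have := mem_antidiagonal.1 hkm
    obtain h | h | h := lt_trichotomy km.1 (2 * q)
    · exact h𝒢.sandwichSum_eq_zero_of_le ha hl (bridge _) (by lia)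
    · obtain h' : km.2 = 4 * p + 1 := by lia
      rw [h, h']
      refine h𝒢.sandwichSum_eq_zero_of_odd ha ?_ hl
      simpa [show (2 : ZMod 2) = 0 from rfl] using bridge (2 * q)
    · obtain ⟨k, hk⟩ := Nat.exists_eq_add_of_lt h
      have : linkBridge b x y z km.1 = 0 := by
        rw [hk, linkBridge, pow_eq_zero_of_le (Nat.le_add_right _ _) b_pow, Matrix.mul_zero,
          Matrix.zero_mul]
      simp [sandwichSum, this]
  rw [linkMatrix_pow_succ, corner, sandwichSum_eq_zero a_pow b_pow (by lia),
    sandwichSum_eq_zero b_pow a_pow (by lia), pow_eq_zero_of_le (by lia) a_pow,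
    pow_eq_zero_of_le (by lia) b_pow]
  ext i j
  rcases i with (i | i) | i <;> rcases j with (j | j) | j <;> rfl

end IsSupercommutative

section ExteriorAlgebra

open ExteriorAlgebra

variable {K M : Type*} [CommRing K] [AddCommGroup M] [Module K M]

theorem ι_mul_ι_eq_neg_swap (u v : M) : ι K u * ι K v = -(ι K v * ι K u) :=
  eq_neg_of_add_eq_zero_left (ι_add_mul_swap u v)

theorem commute_ι_mul_ι (u v : M) (b : ExteriorAlgebra K M) : Commute (ι K u * ι K v) b := by
  induction b using ExteriorAlgebra.induction with
  | algebraMap r => exact (Algebra.commutes r _).symm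
  | ι w =>
    change ι K u * ι K v * ι K w = ι K w * (ι K u * ι K v)
    rw [mul_assoc, ι_mul_ι_eq_neg_swap v w, mul_neg, ← mul_assoc, ι_mul_ι_eq_neg_swap u w,
      neg_mul, neg_neg, mul_assoc]
  | mul a b ha hb => exact ha.mul_right hb
  | add a b ha hb => exact ha.add_right hb

theorem commute_of_mem_evenOdd_zero {a : ExteriorAlgebra K M}
    (ha : a ∈ CliffordAlgebra.evenOdd (0 : QuadraticForm K M) 0) (b : ExteriorAlgebra K M) :
    Commute a b := by
  induction a, ha using CliffordAlgebra.even_induction with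
  | algebraMap r => exact Algebra.commutes r b
  | add x y _ _ hx hy => exact hx.add_left hy
  | ι_mul_ι_mul u v x _ hx => exact (commute_ι_mul_ι u v b).mul_left hx

theorem ι_mul_eq_neg_mul_of_mem_evenOdd_one (v : M) {b : ExteriorAlgebra K M}
    (hb : b ∈ CliffordAlgebra.evenOdd (0 : QuadraticForm K M) 1) : ι K v * b = -(b * ι K v) := by
  induction b, hb using CliffordAlgebra.odd_induction with
  | ι w => exact ι_mul_ι_eq_neg_swap v w
  | add x y _ _ hx hy => rw [mul_add, hx, hy, add_mul, neg_add]
  | ι_mul_ι_mul u w x _ hx =>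
    have h := commute_ι_mul_ι (K := K) u w
    rw [(h (ι K v)).symm.left_comm, hx, mul_neg, ← mul_assoc]

theorem isSupercommutative_exteriorAlgebra :
    IsSupercommutative (CliffordAlgebra.evenOdd (0 : QuadraticForm K M)) where
  commute_of_even ha := commute_of_mem_evenOdd_zero ha
  mul_eq_neg_mul_of_odd {a b} ha hb := by
    induction a, ha using CliffordAlgebra.odd_induction with
    | ι v => exact ι_mul_eq_neg_mul_of_mem_evenOdd_one v hb
    | add x y _ _ hx hy => rw [add_mul, hx, hy, mul_add, neg_add]
    | ι_mul_ι_mul u v x _ hx =>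
      rw [mul_assoc, hx, mul_neg, (commute_ι_mul_ι u v b).left_comm]

theorem isAddTorsionFree_exteriorAlgebra [IsAddTorsionFree K] {I : Type*} [LinearOrder I]
    (b : Module.Basis I K M) : IsAddTorsionFree (ExteriorAlgebra K M) :=
  b.ExteriorAlgebra.repr.injective.isAddTorsionFree b.ExteriorAlgebra.repr.toAddMonoidHom

end ExteriorAlgebra

section GenericOddMatrix

variable {K l m n : Type*} [CommRing K] {d : ℕ}

/-- The matrix `∑ k, x k ⊗ e k` over the exterior algebra on the standard basis `e` of `K ^ d`;
its `d`-th power computes the standard polynomial of degree `d` at `x`. -/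
noncomputable def genericOddMatrix (x : Fin d → Matrix l m K) :
    Matrix l m (ExteriorAlgebra K (Fin d → K)) :=
  of fun i j => ExteriorAlgebra.ι K fun k => x k i j

theorem isHomogeneousMatrix_genericOddMatrix (x : Fin d → Matrix l m K) :
    IsHomogeneousMatrix (CliffordAlgebra.evenOdd (0 : QuadraticForm K (Fin d → K))) 1
      (genericOddMatrix x) :=
  fun _ _ => CliffordAlgebra.ι_mem_evenOdd_one _ _

theorem genericOddMatrix_apply (x : Fin d → Matrix l m K) (i : l) (j : m) :
    genericOddMatrix x i j = ∑ k, x k i j • ExteriorAlgebra.ι K (Pi.single k (1 : K)) := by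
  simp only [genericOddMatrix, of_apply, ← map_smul, ← map_sum]
  exact congrArg _ (pi_eq_sum_univ' fun k => x k i j)

variable [Fintype m] [DecidableEq m]

theorem genericOddMatrix_pow_apply (x : Fin d → Matrix m m K) (N : ℕ) (i j : m) :
    (genericOddMatrix x ^ N) i j = ∑ f : Fin N → Fin d,
      ((List.ofFn fun k => x (f k)).prod i j) •
        ExteriorAlgebra.ιMulti K N (fun k => Pi.single (f k) (1 : K)) := by
  induction N generalizing i j with
  | zero => simp [one_apply]
  | succ N ih =>
    rw [pow_succ', mul_apply, ← (Fin.consEquiv (fun _ : Fin (N + 1) => Fin d)).sum_comp,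
      Fintype.sum_prod_type]
    simp only [Fin.consEquiv_apply, ExteriorAlgebra.ιMulti_succ_apply, List.ofFn_succ,
      Fin.cons_zero, Fin.cons_succ, List.prod_cons, mul_apply, Finset.sum_smul,
      genericOddMatrix_apply, ih, Finset.sum_mul_sum, smul_mul_smul_comm]
    rw [Finset.sum_comm]
    exact Finset.sum_congr rfl fun k _ => Finset.sum_comm

theorem genericOddMatrix_pow_self_apply (x : Fin d → Matrix m m K) (i j : m) :
    (genericOddMatrix x ^ d) i j =
      stdPoly d x i j • ExteriorAlgebra.ιMulti K d (fun k => Pi.single k (1 : K)) := by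
  rw [genericOddMatrix_pow_apply, stdPoly, Matrix.sum_apply, Finset.sum_smul]
  symm
  refine Fintype.sum_of_injective (fun σ : Equiv.Perm (Fin d) => (σ : Fin d → Fin d))
    DFunLike.coe_injective _ _ (fun f hf => ?_) fun σ => ?_
  · rw [AlternatingMap.map_eq_zero_of_not_injective, smul_zero]
    intro hinj
    exact hf ⟨Equiv.ofBijective f (Finite.injective_iff_bijective.1 (hinj.of_comp
      (f := fun k => (Pi.single k 1 : Fin d → K)))), rfl⟩
  · have := (ExteriorAlgebra.ιMulti K d).map_perm (fun k => (Pi.single k 1 : Fin d → K)) σ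
    rw [Function.comp_def] at this
    rw [this, smul_comm, Matrix.smul_apply, Units.smul_def, smul_assoc]

theorem stdPoly_eq_zero_of_genericOddMatrix_pow (x : Fin d → Matrix m m K)
    (h : genericOddMatrix x ^ d = 0) : stdPoly d x = 0 := by
  let φ : ExteriorAlgebra K (Fin d → K) →ₗ[K] K := ExteriorAlgebra.liftAlternating
    (Function.update 0 d Matrix.detRowAlternating)
  have hφ : φ (ExteriorAlgebra.ιMulti K d fun k => Pi.single k (1 : K)) = 1 := by
    rw [ExteriorAlgebra.liftAlternating_apply_ιMulti, Function.update_self]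
    refine (congrArg det (Matrix.ext fun i j => ?_)).trans det_one
    exact (Pi.single_apply i 1 j).trans (if_congr eq_comm rfl rfl)
  ext i j
  have := congrArg φ (congrFun₂ h i j)
  rwa [genericOddMatrix_pow_self_apply, map_smul, hφ, smul_eq_mul, mul_one, Matrix.zero_apply,
    map_zero] at this

end GenericOddMatrix

section StandardIdentities

theorem stdPoly_map {R S : Type*} [Ring R] [Ring S] (f : R →+* S) (d : ℕ) (x : Fin d → R) :
    f (stdPoly d x) = stdPoly d fun i => f (x i) := by
  simp only [stdPoly, map_sum, map_zsmul, map_list_prod, List.map_ofFn, Function.comp_def]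

variable {K l m n : Type*} [CommRing K]

/-- The evaluation homomorphism from the polynomial ring over `ℤ` with one variable for each
element of `K`; it reduces polynomial identities over `K` to torsion-free coefficients. -/
noncomputable def evalVariables (K : Type*) [CommRing K] : MvPolynomial K ℤ →+* K :=
  MvPolynomial.eval₂Hom (Int.castRingHom K) id

theorem map_X_map_evalVariables (x : Matrix l m K) :
    (x.map (MvPolynomial.X : K → MvPolynomial K ℤ)).map (evalVariables K) = x := by
  ext i j
  simp only [evalVariables, map_apply, MvPolynomial.eval₂Hom_X', id]

theorem linkMatrix_map {R S : Type*} [CommRing R] [CommRing S] (f : R →+* S) (a : Matrix l l R)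
    (b : Matrix n n R) (x : Matrix l n R) (y : Matrix n l R) (z : Matrix l l R) :
    (linkMatrix a b x y z).map f =
      linkMatrix (a.map f) (b.map f) (x.map f) (y.map f) (z.map f) := by
  ext (⟨i | i⟩ | i) (⟨j | j⟩ | j) <;> simp [linkMatrix]

theorem genericOddMatrix_linkMatrix {d : ℕ} (a : Fin d → Matrix l l K) (b : Fin d → Matrix n n K)
    (x : Fin d → Matrix l n K) (y : Fin d → Matrix n l K) (z : Fin d → Matrix l l K) :
    genericOddMatrix (fun k => linkMatrix (a k) (b k) (x k) (y k) (z k)) =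
      linkMatrix (genericOddMatrix a) (genericOddMatrix b) (genericOddMatrix x)
        (genericOddMatrix y) (genericOddMatrix z) := by
  have ι_zero : ExteriorAlgebra.ι K (fun _ => 0 : Fin d → K) = 0 := map_zero _
  ext (⟨i | i⟩ | i) (⟨j | j⟩ | j) <;> simp [linkMatrix, genericOddMatrix, ι_zero]

variable [Fintype m] [DecidableEq m]

theorem stdPoly_map_eq_zero {R : Type*} [CommRing R] (f : R →+* K) {d : ℕ}
    {x : Fin d → Matrix m m R} (h : stdPoly d x = 0) :
    stdPoly d (fun k => (x k).map f) = 0 := by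
  simpa only [h, map_zero, RingHom.mapMatrix_apply] using (stdPoly_map f.mapMatrix d x).symm

theorem amitsur_levitzki_of_isAddTorsionFree [IsAddTorsionFree K]
    (x : Fin (2 * Fintype.card m) → Matrix m m K) : stdPoly (2 * Fintype.card m) x = 0 :=
  have := isAddTorsionFree_exteriorAlgebra (Pi.basisFun K (Fin (2 * Fintype.card m)))
  stdPoly_eq_zero_of_genericOddMatrix_pow x <|
    isSupercommutative_exteriorAlgebra.pow_two_mul_card_eq_zero_of_odd
      (isHomogeneousMatrix_genericOddMatrix x)

theorem amitsur_levitzki (x : Fin (2 * Fintype.card m) → Matrix m m K) :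
    stdPoly (2 * Fintype.card m) x = 0 := by
  simpa only [map_X_map_evalVariables] using stdPoly_map_eq_zero (evalVariables K)
    (amitsur_levitzki_of_isAddTorsionFree fun k => (x k).map MvPolynomial.X)

variable [Fintype l] [DecidableEq l] [Fintype n] [DecidableEq n] {p : ℕ}
  (hl : Fintype.card l = p + 1)
  (a : Fin (4 * p + 2 * Fintype.card n + 2) → Matrix l l K)
  (b : Fin (4 * p + 2 * Fintype.card n + 2) → Matrix n n K)
  (x : Fin (4 * p + 2 * Fintype.card n + 2) → Matrix l n K)
  (y : Fin (4 * p + 2 * Fintype.card n + 2) → Matrix n l K)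
  (z : Fin (4 * p + 2 * Fintype.card n + 2) → Matrix l l K)
include hl

theorem stdPoly_linkMatrix_of_isAddTorsionFree [IsAddTorsionFree K] :
    stdPoly _ (fun k => linkMatrix (a k) (b k) (x k) (y k) (z k)) = 0 := by
  have := isAddTorsionFree_exteriorAlgebra
    (Pi.basisFun K (Fin (4 * p + 2 * Fintype.card n + 2)))
  apply stdPoly_eq_zero_of_genericOddMatrix_pow
  rw [genericOddMatrix_linkMatrix]
  apply isSupercommutative_exteriorAlgebra.linkMatrix_pow_eq_zero <;>
    first | exact hl | exact isHomogeneousMatrix_genericOddMatrix _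

theorem stdPoly_linkMatrix :
    stdPoly _ (fun k => linkMatrix (a k) (b k) (x k) (y k) (z k)) = 0 := by
  simpa only [linkMatrix_map, map_X_map_evalVariables] using stdPoly_map_eq_zero (evalVariables K)
    (stdPoly_linkMatrix_of_isAddTorsionFree hl (fun k => (a k).map MvPolynomial.X)
      (fun k => (b k).map MvPolynomial.X) (fun k => (x k).map MvPolynomial.X)
      (fun k => (y k).map MvPolynomial.X) fun k => (z k).map MvPolynomial.X)

end StandardIdentities

section ActionIdentities

variable {R : Type*} [Ring R]

theorem stdPoly_eq_alternatization (d : ℕ) (x : Fin d → R) :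
    stdPoly d x =
      MultilinearMap.alternatization (MultilinearMap.mkPiAlgebraFin ℤ d R) x := by
  simp only [stdPoly, MultilinearMap.alternatization_apply, MultilinearMap.domDomCongr_apply,
    MultilinearMap.mkPiAlgebraFin_apply, Units.smul_def]

theorem stdPoly_add_eq_mul'_domCoprod {a b : ℕ} (x : Fin (a + b) → R) :
    stdPoly (a + b) x = LinearMap.mul' ℤ R
      ((MultilinearMap.alternatization (MultilinearMap.mkPiAlgebraFin ℤ a R)).domCoprod
        (MultilinearMap.alternatization (MultilinearMap.mkPiAlgebraFin ℤ b R))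
        (x ∘ finSumFinEquiv)) := by
  rw [← MultilinearMap.domCoprod_alternization, MultilinearMap.alternatization_apply, map_sum,
    stdPoly, ← finSumFinEquiv.permCongr.sum_comp]
  refine Finset.sum_congr rfl fun σ _ => ?_
  have castLE_eq (i : Fin a) : Fin.castLE (Nat.le_add_right a b) i = Fin.castAdd b i := rfl
  simp [-zsmul_eq_mul, Units.smul_def, List.ofFn_add, Equiv.permCongr_apply, castLE_eq]

theorem stdPoly_add_mem {a b : ℕ} (S : AddSubgroup R)
    (hS : ∀ y z, stdPoly a y * stdPoly b z ∈ S) (x : Fin (a + b) → R) :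
    stdPoly (a + b) x ∈ S := by
  rw [stdPoly_add_eq_mul'_domCoprod, AlternatingMap.domCoprod_apply, _root_.sum_apply,
    map_sum]
  refine S.sum_mem fun q _ => ?_
  induction q using Quotient.inductionOn' with | _ σ
  rw [AlternatingMap.domCoprod.summand_mk'', Units.smul_def, _root_.smul_apply, map_zsmul]
  refine S.zsmul_mem ?_ _
  simpa only [MultilinearMap.domDomCongr_apply, MultilinearMap.domCoprod_apply,
    AlternatingMap.coe_multilinearMap, LinearMap.mul'_apply, stdPoly_eq_alternatization]
    using hS _ _

/-- The elements of the ring `R` satisfy the standard polynomial of degree `d` as operators on the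
`R`-module `V`. -/
def SatisfiesStdPoly (R V : Type*) [Ring R] [AddCommGroup V] [Module R V] (d : ℕ) : Prop :=
  ∀ (x : Fin d → R) (v : V), stdPoly d x • v = 0

variable {V W : Type*} [AddCommGroup V] [Module R V] [AddCommGroup W] [Module R W]

namespace SatisfiesStdPoly

theorem of_quotient (N : Submodule R V) {a b : ℕ} (hN : SatisfiesStdPoly R N a)
    (hVN : SatisfiesStdPoly R (V ⧸ N) b) : SatisfiesStdPoly R V (a + b) := by
  intro x v
  refine stdPoly_add_mem (LinearMap.toSpanSingleton R V v).toAddMonoidHom.ker (fun y z => ?_) x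
  change (stdPoly a y * stdPoly b z) • v = 0
  have hv : stdPoly b z • v ∈ N := (Submodule.Quotient.mk_eq_zero N).1 (hVN z (N.mkQ v))
  rw [mul_smul]
  exact congrArg Subtype.val (hN y ⟨_, hv⟩)

theorem congr (e : V ≃ₗ[R] W) {d : ℕ} (h : SatisfiesStdPoly R V d) : SatisfiesStdPoly R W d :=
  fun x w => by
    rw [← e.apply_symm_apply w, ← map_smul, h x, map_zero]

theorem mono {a b : ℕ} (h : SatisfiesStdPoly R V a) (hab : a ≤ b) : SatisfiesStdPoly R V b := by
  obtain ⟨c, rfl⟩ := Nat.exists_eq_add_of_le hab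
  exact of_quotient ⊤ (h.congr Submodule.topEquiv.symm) fun _ _ => Subsingleton.elim _ _

end SatisfiesStdPoly

section ActionMatrix

variable {K m n : Type*} [CommRing K] [Module K V] [Module K W] [SMulCommClass R K V]
  [SMulCommClass R K W] [Fintype m] [DecidableEq m]

/-- The matrix representation of the ring `R` on the module `V` in the basis `b` over `K`. -/
noncomputable def actionMatrix (R : Type*) [Ring R] [Module R V] [SMulCommClass R K V]
    (b : Module.Basis m K V) : R →+* Matrix m m K :=
  (LinearMap.toMatrixAlgEquiv b).toRingEquiv.toRingHom.comp (Module.toModuleEnd K V)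

theorem actionMatrix_apply (b : Module.Basis m K V) (r : R) (i j : m) :
    actionMatrix R b r i j = b.repr (r • b j) i :=
  LinearMap.toMatrixAlgEquiv_apply b _ i j

theorem smul_eq_zero_of_actionMatrix_eq_zero (b : Module.Basis m K V) {r : R}
    (h : actionMatrix R b r = 0) (v : V) : r • v = 0 :=
  LinearMap.congr_fun ((LinearMap.toMatrixAlgEquiv b).map_eq_zero_iff.1 h) v

theorem SatisfiesStdPoly.of_actionMatrix (b : Module.Basis m K V) {d : ℕ}
    (h : ∀ x : Fin d → R, stdPoly d (fun k => actionMatrix R b (x k)) = 0) :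
    SatisfiesStdPoly R V d := fun x =>
  smul_eq_zero_of_actionMatrix_eq_zero b ((stdPoly_map (actionMatrix R b) d x).trans (h x))

omit [DecidableEq m] in
theorem satisfiesStdPoly_two_mul_card (b : Module.Basis m K V) :
    SatisfiesStdPoly R V (2 * Fintype.card m) := by
  classical exact .of_actionMatrix b fun _ => amitsur_levitzki _

end ActionMatrix

end ActionIdentities

section DoubleCentralizer

variable {F R V : Type*} [Field F] [Ring R] [Algebra F R] [AddCommGroup V] [Module F V]
  [Module R V] [IsScalarTower F R V] [FiniteDimensional F V]

theorem satisfiesStdPoly_two_mul_finrank (K : Type*) [Field K] [Module K V] [SMulCommClass R K V]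
    [FiniteDimensional K V] : SatisfiesStdPoly R V (2 * Module.finrank K V) := by
  simpa only [Fintype.card_fin] using satisfiesStdPoly_two_mul_card (Module.finBasis K V)

theorem toModuleEnd_surjective_of_algebraMap_end_surjective [IsSemisimpleModule R V]
    (h : Function.Surjective (algebraMap F (Module.End R V))) :
    Function.Surjective (Module.toModuleEnd F V : R →+* Module.End F V) := by
  intro f
  have : Module.Finite (Module.End R V) V := .of_restrictScalars_finite F _ _
  obtain ⟨r, hr⟩ := Module.Finite.toModuleEnd_moduleEnd_surjective (R := R)
    { f with
      map_smul' := fun u v => by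
        obtain ⟨c, rfl⟩ := h u
        exact map_smul f c v }
  exact ⟨r, LinearMap.ext fun v => LinearMap.congr_fun hr v⟩

omit [Algebra F R] [IsScalarTower F R V] in
theorem satisfiesStdPoly_of_finrank_ne_one [Nontrivial V] (K : Type*) [Field K] [Algebra F K]
    [Module K V] [IsScalarTower F K V] [SMulCommClass R K V] (hK : Module.finrank F K ≠ 1) :
    SatisfiesStdPoly R V (2 * Module.finrank F V - 2) := by
  have : FiniteDimensional K V := .right F K V
  have tower : Module.finrank F K * Module.finrank K V = Module.finrank F V :=
    Module.finrank_mul_finrank F K V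
  have finrank_pos : 0 < Module.finrank F V := Module.finrank_pos
  have one_lt : 2 ≤ Module.finrank F K := by
    have : Module.finrank F K ≠ 0 := fun h => by simp [h] at tower; omega
    omega
  refine (satisfiesStdPoly_two_mul_finrank K).mono ?_
  have := Nat.mul_le_mul_right (Module.finrank K V) one_lt
  have : 0 < Module.finrank K V := Module.finrank_pos
  omega

theorem satisfiesStdPoly_of_not_algebraMap_end_surjective [IsSimpleModule R V]
    (h : ¬ Function.Surjective (algebraMap F (Module.End R V))) :
    SatisfiesStdPoly R V (2 * Module.finrank F V - 2) := by
  have : FiniteDimensional F (Module.End R V) :=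
    .of_injective (LinearMap.restrictScalarsₗ F R V V F) (LinearMap.restrictScalars_injective F)
  have := IsSimpleModule.nontrivial R V
  obtain ⟨u, hu⟩ := not_forall.1 h
  have u_integral : IsIntegral F u := .of_finite F u
  classical
  have : Fact (Irreducible (minpoly F u)) := ⟨minpoly.irreducible u_integral⟩
  let φ : AdjoinRoot (minpoly F u) →+* Module.End R V :=
    Ideal.Quotient.lift _ (Polynomial.aeval u).toRingHom fun p hp =>
      (minpoly.dvd_iff).1 (Ideal.mem_span_singleton.1 hp)
  have φ_algebraMap (c : F) : φ (algebraMap F _ c) = algebraMap F _ c :=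
    Polynomial.aeval_C u c
  let _ : Module (AdjoinRoot (minpoly F u)) V := Module.compHom V φ
  have : IsScalarTower F (AdjoinRoot (minpoly F u)) V := .of_algebraMap_smul fun c v =>
    LinearMap.congr_fun (φ_algebraMap c) v
  have : SMulCommClass R (AdjoinRoot (minpoly F u)) V := ⟨fun r k v => ((φ k).map_smul r v).symm⟩
  refine satisfiesStdPoly_of_finrank_ne_one (AdjoinRoot (minpoly F u)) ?_
  rw [(AdjoinRoot.powerBasis (minpoly.ne_zero u_integral)).finrank, AdjoinRoot.powerBasis_dim]
  exact fun h1 => hu (minpoly.natDegree_eq_one_iff.1 h1)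

theorem satisfiesStdPoly_of_not_toModuleEnd_surjective [IsSimpleModule R V]
    (h : ¬ Function.Surjective (Module.toModuleEnd F V : R →+* Module.End F V)) :
    SatisfiesStdPoly R V (2 * Module.finrank F V - 2) :=
  satisfiesStdPoly_of_not_algebraMap_end_surjective
    (mt toModuleEnd_surjective_of_algebraMap_end_surjective h)

end DoubleCentralizer

section CompositionFactors

variable {F R V : Type*} [Field F] [Ring R] [Algebra F R] [AddCommGroup V] [Module F V]
  [Module R V] [IsScalarTower F R V]

section AdaptedBasis

variable {m n : Type*}

/-- The `F`-basis of `V` obtained by lifting a basis of the quotient by an `R`-submodule `N` and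
adjoining it to a basis of `N`. -/
noncomputable def adaptedBasis (N : Submodule R V) (bN : Module.Basis m F N)
    (bQ : Module.Basis n F (V ⧸ N)) : Module.Basis (m ⊕ n) F V :=
  Module.Basis.sumQuot (W := N.restrictScalars F) bN
    (bQ.map (Submodule.Quotient.restrictScalarsEquiv F N).symm)

variable (N : Submodule R V) (bN : Module.Basis m F N) (bQ : Module.Basis n F (V ⧸ N))

@[simp]
theorem adaptedBasis_inl (j : m) : adaptedBasis N bN bQ (Sum.inl j) = bN j :=
  Module.Basis.sumQuot_inl ..

@[simp]
theorem mkQ_adaptedBasis_inr (j : n) : N.mkQ (adaptedBasis N bN bQ (Sum.inr j)) = bQ j := by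
  refine (congrArg (Submodule.Quotient.restrictScalarsEquiv F N)
    (Module.Basis.sumQuot_inr ..)).trans ?_
  simp

theorem adaptedBasis_repr_inl (w : N) (i : m) :
    (adaptedBasis N bN bQ).repr w (Sum.inl i) = bN.repr w i :=
  Module.Basis.sumQuot_repr_inl_of_mem _ _ _ w.2 i

theorem adaptedBasis_repr_inr (v : V) (i : n) :
    (adaptedBasis N bN bQ).repr v (Sum.inr i) = bQ.repr (N.mkQ v) i :=
  Module.Basis.sumQuot_repr_inr ..

theorem exists_actionMatrix_adaptedBasis [Fintype m] [DecidableEq m] [Fintype n] [DecidableEq n]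
    (r : R) : ∃ B : Matrix m n F, actionMatrix R (adaptedBasis N bN bQ) r =
      fromBlocks (actionMatrix R bN r) B 0 (actionMatrix R bQ r) := by
  refine ⟨(actionMatrix R (adaptedBasis N bN bQ) r).toBlocks₁₂, Matrix.ext fun i j => ?_⟩
  rcases i with i | i <;> rcases j with j | j
  · rw [actionMatrix_apply, adaptedBasis_inl, ← Submodule.coe_smul, adaptedBasis_repr_inl]
    exact (actionMatrix_apply ..).symm
  · rfl
  · have := (Submodule.Quotient.mk_eq_zero N).2 (r • bN j).2
    rw [actionMatrix_apply, adaptedBasis_inl, ← Submodule.coe_smul, adaptedBasis_repr_inr,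
      Submodule.mkQ_apply, this, map_zero]
    rfl
  · rw [actionMatrix_apply, adaptedBasis_repr_inr, map_smul, mkQ_adaptedBasis_inr]
    exact (actionMatrix_apply ..).symm

theorem forall_mkQ_apply_eq_iff_toBlocks [Fintype m] [DecidableEq m] [Fintype n] [DecidableEq n]
    {f : Module.End F V} {g : Module.End F (V ⧸ N)} :
    (∀ v, N.mkQ (f v) = g (N.mkQ v)) ↔
      (LinearMap.toMatrix (adaptedBasis N bN bQ) (adaptedBasis N bN bQ) f).toBlocks₂₁ = 0 ∧
      (LinearMap.toMatrix (adaptedBasis N bN bQ) (adaptedBasis N bN bQ) f).toBlocks₂₂ =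
        LinearMap.toMatrix bQ bQ g := by
  set b := adaptedBasis N bN bQ
  have toMatrix_inr (i : n) (j : m ⊕ n) :
      LinearMap.toMatrix b b f (Sum.inr i) j = bQ.repr (N.mkQ (f (b j))) i := by
    rw [LinearMap.toMatrix_apply, adaptedBasis_repr_inr]
  have mkQ_inl (j : m) : N.mkQ (b (Sum.inl j)) = 0 := by
    rw [adaptedBasis_inl]
    exact (Submodule.Quotient.mk_eq_zero N).2 (bN j).2
  calc (∀ v, N.mkQ (f v) = g (N.mkQ v))
      ↔ N.mkQ.restrictScalars F ∘ₗ f = g ∘ₗ N.mkQ.restrictScalars F :=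
      ⟨fun h => LinearMap.ext h, LinearMap.congr_fun⟩
    _ ↔ ∀ j, N.mkQ (f (b j)) = g (N.mkQ (b j)) :=
      ⟨fun h j => LinearMap.congr_fun h (b j), fun h => b.ext h⟩
    _ ↔ (∀ j i, bQ.repr (N.mkQ (f (b (Sum.inl j)))) i = 0) ∧
        ∀ j i, bQ.repr (N.mkQ (f (b (Sum.inr j)))) i = bQ.repr (g (bQ j)) i := by
      simp only [bQ.ext_elem_iff, Sum.forall, mkQ_inl, mkQ_adaptedBasis_inr, map_zero, b,
        Finsupp.zero_apply]
    _ ↔ _ := by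
      simp only [← Matrix.ext_iff, toBlocks₂₁, toBlocks₂₂, of_apply, toMatrix_inr,
        LinearMap.toMatrix_apply bQ bQ, Matrix.zero_apply]
      exact and_congr forall_comm forall_comm

theorem actionMatrix_map [Fintype m] [DecidableEq m] {W : Type*} [AddCommGroup W] [Module F W]
    [Module R W] [IsScalarTower F R W] (b : Module.Basis m F V) (e : V ≃ₗ[R] W) (r : R) :
    actionMatrix R (b.map (e.restrictScalars F)) r = actionMatrix R b r := by
  ext i j
  simp [actionMatrix_apply]

end AdaptedBasis

variable [FiniteDimensional F V]

instance finite_submodule (N : Submodule R V) : Module.Finite F N :=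
  .of_injective (N.subtype.restrictScalars F) N.subtype_injective

theorem finrank_add_finrank_quotient (N : Submodule R V) :
    Module.finrank F N + Module.finrank F (V ⧸ N) = Module.finrank F V := by
  rw [← Submodule.finrank_quotient_add_finrank (N.restrictScalars F), add_comm,
    (Submodule.Quotient.restrictScalarsEquiv F N).finrank_eq]
  rfl

theorem finrank_submodule_pos {N : Submodule R V} (hN : N ≠ ⊥) : 0 < Module.finrank F N :=
  have := Submodule.nontrivial_iff_ne_bot.2 hN
  Module.finrank_pos

theorem satisfiesStdPoly_of_submodule {N : Submodule R V} (hN : N ≠ ⊥)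
    (h : SatisfiesStdPoly R N (2 * Module.finrank F N - 2)) :
    SatisfiesStdPoly R V (2 * Module.finrank F V - 2) := by
  have finrank_add := finrank_add_finrank_quotient (F := F) N
  have finrank_pos := finrank_submodule_pos (F := F) hN
  exact (h.of_quotient N (satisfiesStdPoly_two_mul_finrank F)).mono (by omega)

theorem satisfiesStdPoly_of_quotient {N : Submodule R V} (hN : N ≠ ⊤)
    (h : SatisfiesStdPoly R (V ⧸ N) (2 * Module.finrank F (V ⧸ N) - 2)) :
    SatisfiesStdPoly R V (2 * Module.finrank F V - 2) := by
  have finrank_add := finrank_add_finrank_quotient (F := F) N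
  have := Submodule.Quotient.nontrivial_iff.2 hN
  have finrank_pos : 0 < Module.finrank F (V ⧸ N) := Module.finrank_pos
  exact ((satisfiesStdPoly_two_mul_finrank F).of_quotient N h).mono (by omega)

theorem satisfiesStdPoly_of_linearEquiv {N₁ N : Submodule R V} (hle : N₁ ≤ N) (hN₁ : N₁ ≠ ⊥)
    (e : N₁ ≃ₗ[R] V ⧸ N) : SatisfiesStdPoly R V (2 * Module.finrank F V - 2) := by
  let e' := Submodule.submoduleOfEquivOfLe hle
  let c := Module.finBasis F N₁
  let bN := adaptedBasis (N₁.submoduleOf N) (c.map (e'.symm.restrictScalars F))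
    (Module.finBasis F (N ⧸ N₁.submoduleOf N))
  let b := adaptedBasis N bN (c.map (e.restrictScalars F))
  have finrank_V := finrank_add_finrank_quotient (F := F) N
  have finrank_N := finrank_add_finrank_quotient (F := F) (N₁.submoduleOf N)
  have finrank_N₁ := (e'.restrictScalars F).finrank_eq
  have finrank_quotient := (e.restrictScalars F).finrank_eq
  obtain ⟨p, hp⟩ := Nat.exists_eq_add_of_lt (finrank_submodule_pos (F := F) hN₁)
  have card_eq : Fintype.card (Fin (Module.finrank F N₁)) = p + 1 := by
    rw [Fintype.card_fin]; omega
  have degree_eq : 2 * Module.finrank F V - 2 = 4 * p + 2 * Fintype.card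
      (Fin (Module.finrank F (N ⧸ N₁.submoduleOf N))) + 2 := by
    rw [Fintype.card_fin]; omega
  rw [degree_eq]
  refine .of_actionMatrix b fun x => ?_
  choose y hy using fun k => exists_actionMatrix_adaptedBasis (N₁.submoduleOf N)
    (c.map (e'.symm.restrictScalars F)) (Module.finBasis F (N ⧸ N₁.submoduleOf N)) (x k)
  choose z hz using fun k => exists_actionMatrix_adaptedBasis N bN
    (c.map (e.restrictScalars F)) (x k)
  convert stdPoly_linkMatrix card_eq (fun k => actionMatrix R c (x k))
    (fun k => actionMatrix R (Module.finBasis F (N ⧸ N₁.submoduleOf N)) (x k)) y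
    (fun k => (z k).toRows₂) fun k => (z k).toRows₁ with k
  rw [hz, hy, linkMatrix, fromRows_toRows, actionMatrix_map, actionMatrix_map]

section Annihilators

omit [Algebra F R] [IsScalarTower F R V] in
theorem nonempty_linearEquiv_of_annihilator_le {U : Type*} [AddCommGroup U] [Module R U]
    [SMulCommClass R F V] [IsSimpleModule R V] [IsSimpleModule R U]
    (h : Module.annihilator R V ≤ Module.annihilator R U) : Nonempty (V ≃ₗ[R] U) := by
  have := IsSimpleModule.nontrivial R U
  obtain ⟨u, hu⟩ := exists_ne (0 : U)
  obtain ⟨n, v, hv⟩ := Module.Finite.exists_fin (R := F) (M := V)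
  let evaluation : R →ₗ[R] Fin n → V := LinearMap.pi fun i => LinearMap.toSpanSingleton R V (v i)
  let ψ : R →ₗ[R] U := LinearMap.toSpanSingleton R U u
  have ker_le : LinearMap.ker evaluation ≤ LinearMap.ker ψ := by
    intro r hr
    have : Module.toModuleEnd F V r = 0 :=
      LinearMap.ext_on_range hv fun i => congrFun (LinearMap.mem_ker.1 hr) i
    exact Module.mem_annihilator.1 (h (Module.mem_annihilator.2 (LinearMap.congr_fun this))) u
  -- As `Fin n → V` is semisimple, `ψ` factors through the evaluation at the vectors `v i`.
  obtain ⟨χ, hχ⟩ := IsSemisimpleModule.extension_property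
    ((LinearMap.ker evaluation).liftQ evaluation le_rfl)
    (LinearMap.ker_eq_bot.1 (Submodule.ker_liftQ_eq_bot' _ _ rfl))
    ((LinearMap.ker evaluation).liftQ ψ ker_le)
  have χ_evaluation : χ (evaluation 1) = u :=
    (LinearMap.congr_fun hχ (Submodule.Quotient.mk 1)).trans (one_smul R u)
  obtain ⟨i, hi⟩ : ∃ i, χ ∘ₗ LinearMap.single R (fun _ => V) i ≠ 0 := by
    by_contra! hzero
    have : χ = 0 := LinearMap.pi_ext' fun i => by rw [hzero, LinearMap.zero_comp]
    exact hu (by rw [← χ_evaluation, this, LinearMap.zero_apply])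
  exact ⟨.ofBijective _ (LinearMap.bijective_of_ne_zero hi)⟩

theorem le_annihilator_or_le_annihilator_of_mul_mem {R U : Type*} [Ring R] [AddCommGroup U]
    [Module R U] [IsSimpleModule R U] {I J : Ideal R}
    (h : ∀ s ∈ I, ∀ r ∈ J, s * r ∈ Module.annihilator R U) :
    I ≤ Module.annihilator R U ∨ J ≤ Module.annihilator R U := by
  refine or_iff_not_imp_right.2 fun hJ s hs => Module.mem_annihilator.2 fun w => ?_
  obtain ⟨r, hr, hrU⟩ := SetLike.not_le_iff_exists.1 hJ
  obtain ⟨u, hu⟩ := not_forall.1 (mt Module.mem_annihilator.2 hrU)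
  obtain ⟨t, rfl⟩ := IsSimpleModule.toSpanSingleton_surjective R hu w
  rw [LinearMap.toSpanSingleton_apply, ← mul_smul t, ← mul_smul]
  exact Module.mem_annihilator.1 (h s hs _ (J.mul_mem_left t hr)) u

theorem mem_annihilator_quotient_iff {R V : Type*} [Ring R] [AddCommGroup V] [Module R V]
    {N : Submodule R V} {r : R} : r ∈ Module.annihilator R (V ⧸ N) ↔ ∀ v : V, r • v ∈ N := by
  rw [Submodule.annihilator_quotient, Submodule.mem_colon]
  simp only [Set.mem_univ, true_implies]

end Annihilators

theorem satisfiesStdPoly_of_annihilator_le {N₁ N : Submodule R V} (hle : N₁ ≤ N)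
    [IsSimpleModule R N₁] [IsSimpleModule R (V ⧸ N)]
    (h : Module.annihilator R (V ⧸ N) ≤ Module.annihilator R N₁) :
    SatisfiesStdPoly R V (2 * Module.finrank F V - 2) :=
  have ⟨e⟩ := nonempty_linearEquiv_of_annihilator_le (F := F) h
  satisfiesStdPoly_of_linearEquiv hle
    (Submodule.nontrivial_iff_ne_bot.1 (IsSimpleModule.nontrivial R N₁)) e.symm

theorem annihilator_quotient_le_or (N₁ N : Submodule R V) [IsSimpleModule R N₁]
    (h : Module.annihilator R (V ⧸ N₁) ≤ Module.annihilator R N₁) :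
    Module.annihilator R (N ⧸ N₁.submoduleOf N) ≤ Module.annihilator R N₁ ∨
      Module.annihilator R (V ⧸ N) ≤ Module.annihilator R N₁ := by
  refine le_annihilator_or_le_annihilator_of_mul_mem fun s hs r hr => h ?_
  refine mem_annihilator_quotient_iff.2 fun v => ?_
  rw [mul_smul]
  exact mem_annihilator_quotient_iff.1 hs ⟨r • v, mem_annihilator_quotient_iff.1 hr v⟩

theorem satisfiesStdPoly_of_annihilator_quotient_le (N₁ : Submodule R V) [IsSimpleModule R N₁]
    (h : Module.annihilator R (V ⧸ N₁) ≤ Module.annihilator R N₁) :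
    SatisfiesStdPoly R V (2 * Module.finrank F V - 2) := by
  induction hd : Module.finrank F V using Nat.strong_induction_on generalizing V with | _ d ih
  subst hd
  have N₁_nontrivial := IsSimpleModule.nontrivial R N₁
  have : IsNoetherian R V := isNoetherian_of_tower F inferInstance
  have N₁_ne_top : N₁ ≠ ⊤ := by
    rintro rfl
    obtain ⟨w, hw⟩ := exists_ne (0 : (⊤ : Submodule R V))
    refine hw ?_
    rw [← one_smul R w]
    exact Module.mem_annihilator.1
      (h (mem_annihilator_quotient_iff.2 fun _ => Submodule.mem_top)) w
  obtain ⟨N, hN, hle⟩ := (eq_top_or_exists_le_coatom N₁).resolve_left N₁_ne_top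
  have : IsSimpleModule R (V ⧸ N) := isSimpleModule_iff_isCoatom.2 hN
  let e := Submodule.submoduleOfEquivOfLe hle
  have : IsSimpleModule R (N₁.submoduleOf N) := .congr e
  rcases annihilator_quotient_le_or N₁ N h with h_sub | h_quot
  · refine satisfiesStdPoly_of_submodule (N := N) ?_ (ih _ ?_ (N₁.submoduleOf N) ?_ rfl)
    · exact ne_bot_of_le_ne_bot (Submodule.nontrivial_iff_ne_bot.1 N₁_nontrivial) hle
    · exact Submodule.finrank_lt (s := N.restrictScalars F) fun N_eq_top =>
        hN.1 ((Submodule.restrictScalars_eq_top_iff F R V).1 N_eq_top)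
    · rwa [e.annihilator_eq]
  · exact satisfiesStdPoly_of_annihilator_le hle h_quot

theorem satisfiesStdPoly_of_disjoint {N K : Submodule R V} (hN : N ≠ ⊥) (hK : K ≠ ⊥)
    (hNK : Disjoint N K) : SatisfiesStdPoly R V (2 * Module.finrank F V - 2) := by
  have smul_mem {M : Submodule R V} (hM : M ≠ ⊥)
      (x : Fin (2 * Module.finrank F V - 2) → R) (v : V) : stdPoly _ x • v ∈ M := by
    have finrank_add := finrank_add_finrank_quotient (F := F) M
    have finrank_pos := finrank_submodule_pos (F := F) hM
    exact (Submodule.Quotient.mk_eq_zero M).1 ((satisfiesStdPoly_two_mul_finrank F (R := R)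
      (V := V ⧸ M)).mono (by omega) x (M.mkQ v))
  exact fun x v => Submodule.disjoint_def.1 hNK _ (smul_mem hN x v) (smul_mem hK x v)

end CompositionFactors

section ActionSubalgebra

variable {F R V : Type*} [Field F] [Ring R] [Algebra F R] [AddCommGroup V] [Module F V]
  [Module R V] [IsScalarTower F R V]

/-- The algebra of the `F`-linear operators on `V` by which the elements of `R` act. -/
def actionSubalgebra (F R V : Type*) [Field F] [Ring R] [Algebra F R] [AddCommGroup V]
    [Module F V] [Module R V] [IsScalarTower F R V] : Subalgebra F (Module.End F V) :=
  (Algebra.lsmul F F V : R →ₐ[F] Module.End F V).range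

theorem mem_actionSubalgebra_iff {f : Module.End F V} :
    f ∈ actionSubalgebra F R V ↔ ∃ r : R, ∀ v, r • v = f v :=
  exists_congr fun _ => LinearMap.ext_iff

variable [FiniteDimensional F V] (N : Submodule R V) [IsSimpleModule R N]

theorem exists_mem_annihilator_quotient_smul_ne_zero
    (hV : ¬ SatisfiesStdPoly R V (2 * Module.finrank F V - 2)) {v : V} (hv : v ≠ 0) :
    ∃ r ∈ Module.annihilator R (V ⧸ N), r • v ≠ 0 := by
  let K : Submodule R V :=
    { carrier := {v | ∀ r ∈ Module.annihilator R (V ⧸ N), r • v = 0}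
      zero_mem' := fun r _ => smul_zero r
      add_mem' := fun hv hw r hr => by rw [smul_add, hv r hr, hw r hr, add_zero]
      smul_mem' := fun s v hv r hr => by
        rw [← mul_smul, hv _ (Ideal.mul_mem_right s _ hr)] }
  by_contra! h
  have N_atom : IsAtom N := isSimpleModule_iff_isAtom.1 ‹_›
  have N_not_le : ¬ N ≤ K := fun hle => hV <|
    satisfiesStdPoly_of_annihilator_quotient_le N fun r hr =>
      Module.mem_annihilator.2 fun w => Subtype.ext (hle w.2 r hr)
  exact hV (satisfiesStdPoly_of_disjoint N_atom.1 (K.ne_bot_iff.2 ⟨v, h, hv⟩)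
    (N_atom.not_le_iff_disjoint.1 N_not_le))

theorem exists_smul_eq_of_not_satisfiesStdPoly
    (hV : ¬ SatisfiesStdPoly R V (2 * Module.finrank F V - 2)) (f : Module.End F N) :
    ∃ r : R, ∀ w, r • w = f w := by
  have N_ne_bot : N ≠ ⊥ := Submodule.nontrivial_iff_ne_bot.1 (IsSimpleModule.nontrivial R N)
  by_contra h
  refine hV (satisfiesStdPoly_of_submodule (F := F) N_ne_bot
    (satisfiesStdPoly_of_not_toModuleEnd_surjective fun hsurj => h ?_))
  exact (hsurj f).imp fun r => LinearMap.congr_fun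

theorem smulRight_mem_actionSubalgebra
    (hV : ¬ SatisfiesStdPoly R V (2 * Module.finrank F V - 2)) (φ : Module.Dual F V) (u : N) :
    φ.smulRight (u : V) ∈ actionSubalgebra F R V := by
  let Φ : Submodule F (Module.Dual F V) :=
    (actionSubalgebra F R V).toSubmodule.comap
      ((LinearMap.smulRightₗ : Module.Dual F V →ₗ[F] V →ₗ[F] Module.End F V).flip u)
  suffices Φ.dualCoannihilator = ⊥ by
    have Φ_eq_top : Φ = ⊤ := by
      rw [← Subspace.dualCoannihilator_dualAnnihilator_eq (W := Φ), this,
        Submodule.dualAnnihilator_bot]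
    exact Φ_eq_top.ge (Submodule.mem_top (x := φ))
  refine (Submodule.eq_bot_iff _).2 fun v hv => by_contra fun v_ne_zero => ?_
  obtain ⟨r, hr, hrv⟩ := exists_mem_annihilator_quotient_smul_ne_zero N hV v_ne_zero
  let ρ : V →ₗ[F] N := LinearMap.codRestrict (N.restrictScalars F) (Module.toModuleEnd F V r)
    (mem_annihilator_quotient_iff.1 hr)
  obtain ⟨ψ, hψ⟩ := Module.Projective.exists_dual_ne_zero F (x := ρ v)
    (mt (congrArg Subtype.val) hrv)
  refine hψ ((Submodule.mem_dualCoannihilator v).1 hv (ψ ∘ₗ ρ) ?_)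
  obtain ⟨s, hs⟩ := exists_smul_eq_of_not_satisfiesStdPoly N hV (ψ.smulRight u)
  refine mem_actionSubalgebra_iff.2 ⟨s * r, fun w => ?_⟩
  rw [mul_smul]
  exact congrArg Subtype.val (hs (ρ w))

theorem mem_actionSubalgebra_of_range_le
    (hV : ¬ SatisfiesStdPoly R V (2 * Module.finrank F V - 2)) {f : Module.End F V}
    (hf : ∀ v, f v ∈ N) : f ∈ actionSubalgebra F R V := by
  let b := Module.finBasis F N
  let g : V →ₗ[F] N := f.codRestrict (N.restrictScalars F) hf
  have f_eq_sum : f = ∑ i, (b.coord i ∘ₗ g).smulRight (b i : V) := by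
    ext v
    have sum_eq := congrArg (N.subtype.restrictScalars F) (b.sum_repr (g v))
    rw [map_sum] at sum_eq
    rw [LinearMap.sum_apply]
    exact sum_eq.symm
  rw [f_eq_sum]
  exact sum_mem fun i _ => smulRight_mem_actionSubalgebra N hV _ (b i)

theorem mem_actionSubalgebra_iff_quotient
    (hV : ¬ SatisfiesStdPoly R V (2 * Module.finrank F V - 2)) {f : Module.End F V} :
    f ∈ actionSubalgebra F R V ↔ ∃ g ∈ actionSubalgebra F R (V ⧸ N),
      ∀ v, N.mkQ (f v) = g (N.mkQ v) := by
  constructor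
  · rintro ⟨r, rfl⟩
    exact ⟨_, ⟨r, rfl⟩, N.mkQ.map_smul r⟩
  · rintro ⟨_, ⟨r, rfl⟩, hf⟩
    rw [← sub_add_cancel f (Algebra.lsmul F F V r)]
    refine add_mem (mem_actionSubalgebra_of_range_le N hV fun v => ?_) ⟨r, rfl⟩
    refine (Submodule.Quotient.mk_eq_zero N).1 ?_
    exact (map_sub N.mkQ _ _).trans (sub_eq_zero.2 (hf v))

end ActionSubalgebra

section BlockUpperTriangular

theorem cum_zero {t : ℕ} (ℓ : Fin t → ℕ) : cum ℓ 0 = 0 := by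
  simp [cum]

theorem cum_cons_succ {t : ℕ} (p : ℕ) (ℓ : Fin t → ℕ) (k : ℕ) :
    cum (Fin.cons p ℓ : Fin (t + 1) → ℕ) (k + 1) = p + cum ℓ k := by
  simp [cum, Fin.sum_univ_succ]

variable {F : Type*} [Field F]

theorem blockUT_single {n : ℕ} (M : Matrix (Fin n) (Fin n) F) :
    BlockUT (fun _ : Fin 1 => n) M := by
  rintro i j ⟨k, hj, hi⟩
  simp only [cum, Finset.univ_unique, Finset.sum_singleton] at hj hi
  split_ifs at hj hi <;> omega

theorem blockUT_cons_iff {t p m : ℕ} (ℓ : Fin t → ℕ)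
    (M : Matrix (Fin p ⊕ Fin m) (Fin p ⊕ Fin m) F) :
    BlockUT (Fin.cons p ℓ : Fin (t + 1) → ℕ) (reindex finSumFinEquiv finSumFinEquiv M) ↔
      M.toBlocks₂₁ = 0 ∧ BlockUT ℓ M.toBlocks₂₂ := by
  constructor
  · intro h
    refine ⟨Matrix.ext fun i j => ?_, fun i j ⟨k, hj, hi⟩ => ?_⟩
    · simpa [toBlocks₂₁] using h (Fin.natAdd p i) (Fin.castAdd m j)
        ⟨1, by simp [cum_cons_succ, cum_zero]⟩
    · simpa [toBlocks₂₂] using h (Fin.natAdd p i) (Fin.natAdd p j)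
        ⟨k + 1, by simp [cum_cons_succ, hj, hi]⟩
  · rintro ⟨h₂₁, h₂₂⟩ i j ⟨_ | k, hj, hi⟩
    · exact absurd hj (by simp [cum_zero])
    rw [cum_cons_succ] at hj hi
    obtain ⟨i, rfl⟩ := finSumFinEquiv.surjective i
    obtain ⟨j, rfl⟩ := finSumFinEquiv.surjective j
    rw [reindex_apply, submatrix_apply, Equiv.symm_apply_apply, Equiv.symm_apply_apply]
    rcases i with i | i <;> rcases j with j | j <;>
      simp only [finSumFinEquiv_apply_left, finSumFinEquiv_apply_right, Fin.val_castAdd,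
        Fin.val_natAdd] at hi hj
    · omega
    · omega
    · exact congrFun₂ h₂₁ i j
    · exact h₂₂ i j ⟨k, by omega, by omega⟩

/-- An algebra of operators is full block triangular of size `n` if, in some basis indexed by
`Fin n`, its elements are represented exactly by the block upper triangular matrices for some
sequence of positive block sizes. -/
def IsFullBlockTriangular {V : Type*} [AddCommGroup V] [Module F V]
    (S : Subalgebra F (Module.End F V)) (n : ℕ) : Prop :=
  ∃ (t : ℕ) (_ : 0 < t) (ℓ : Fin t → ℕ), (∀ i, 0 < ℓ i) ∧ (∑ i, ℓ i) = n ∧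
    ∃ b : Module.Basis (Fin n) F V, ∀ f, f ∈ S ↔ BlockUT ℓ (LinearMap.toMatrix b b f)

namespace IsFullBlockTriangular

theorem top {V : Type*} [AddCommGroup V] [Module F V] [FiniteDimensional F V] [Nontrivial V] :
    IsFullBlockTriangular (⊤ : Subalgebra F (Module.End F V)) (Module.finrank F V) :=
  ⟨1, one_pos, fun _ => Module.finrank F V, fun _ => Module.finrank_pos, by simp,
    Module.finBasis F V, fun _ => iff_of_true Algebra.mem_top (blockUT_single _)⟩

theorem of_quotient {R V : Type*} [Ring R] [Algebra F R] [AddCommGroup V] [Module F V]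
    [Module R V] [IsScalarTower F R V] [FiniteDimensional F V] {N : Submodule R V} (hN : N ≠ ⊥)
    {S : Subalgebra F (Module.End F V)} {T : Subalgebra F (Module.End F (V ⧸ N))}
    (h : ∀ f, f ∈ S ↔ ∃ g ∈ T, ∀ v, N.mkQ (f v) = g (N.mkQ v)) {m : ℕ}
    (hT : IsFullBlockTriangular T m) :
    IsFullBlockTriangular S (Module.finrank F N + m) := by
  obtain ⟨t, -, ℓ, ℓ_pos, ℓ_sum, bQ, mem_T_iff⟩ := hT
  let b := adaptedBasis N (Module.finBasis F N) bQ
  refine ⟨t + 1, t.succ_pos, Fin.cons (Module.finrank F N) ℓ, ?_, ?_, b.reindex finSumFinEquiv,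
    fun f => ?_⟩
  · exact Fin.cases (finrank_submodule_pos hN) ℓ_pos
  · rw [Fin.sum_cons, ℓ_sum]
  have toMatrix_reindex : LinearMap.toMatrix (b.reindex finSumFinEquiv)
      (b.reindex finSumFinEquiv) f = reindex finSumFinEquiv finSumFinEquiv
        (LinearMap.toMatrix b b f) := by
    ext i j
    simp [LinearMap.toMatrix_apply]
  rw [toMatrix_reindex, blockUT_cons_iff, h]
  simp only [forall_mkQ_apply_eq_iff_toBlocks N (Module.finBasis F N) bQ, mem_T_iff]
  constructor
  · rintro ⟨g, hg, h₂₁, h₂₂⟩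
    exact ⟨h₂₁, h₂₂ ▸ hg⟩
  · rintro ⟨h₂₁, h₂₂⟩
    have toMatrix_toLin := LinearMap.toMatrix_toLin bQ bQ (LinearMap.toMatrix b b f).toBlocks₂₂
    exact ⟨toLin bQ bQ _, toMatrix_toLin.symm ▸ h₂₂, h₂₁, toMatrix_toLin.symm⟩

theorem of_not_satisfiesStdPoly {R V : Type*} [Ring R] [Algebra F R] [AddCommGroup V] [Module F V]
    [Module R V] [IsScalarTower F R V] [FiniteDimensional F V] [Nontrivial V]
    (hV : ¬ SatisfiesStdPoly R V (2 * Module.finrank F V - 2)) :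
    IsFullBlockTriangular (actionSubalgebra F R V) (Module.finrank F V) := by
  induction hn : Module.finrank F V using Nat.strong_induction_on generalizing V with | _ n ih
  subst hn
  have : IsArtinian R V := isArtinian_of_tower F inferInstance
  obtain ⟨N, hN⟩ := IsAtomic.exists_atom (Submodule R V)
  have : IsSimpleModule R N := isSimpleModule_iff_isAtom.2 hN
  by_cases N_eq_top : N = ⊤
  · have eq_top : actionSubalgebra F R V = ⊤ := eq_top_iff.2 fun f _ =>
      mem_actionSubalgebra_of_range_le N hV fun v => N_eq_top ▸ Submodule.mem_top
    exact eq_top ▸ top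
  have := Submodule.Quotient.nontrivial_iff.2 N_eq_top
  have finrank_add := finrank_add_finrank_quotient (F := F) N
  have finrank_pos := finrank_submodule_pos (F := F) hN.1
  rw [← finrank_add]
  exact of_quotient hN.1 (fun f => mem_actionSubalgebra_iff_quotient N hV)
    (ih _ (by omega) (mt (satisfiesStdPoly_of_quotient N_eq_top) hV) rfl)

theorem of_stdPoly_ne_zero {V : Type*} [AddCommGroup V] [Module F V] [FiniteDimensional F V]
    {S : Subalgebra F (Module.End F V)} {n : ℕ} (hn : Module.finrank F V = n)
    {x : Fin (2 * n - 2) → Module.End F V} (hxS : ∀ k, x k ∈ S) (hx : stdPoly (2 * n - 2) x ≠ 0) :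
    IsFullBlockTriangular S n := by
  subst hn
  have : Nontrivial V :=
    not_subsingleton_iff_nontrivial.1 fun _ => hx (Subsingleton.elim _ _)
  have S_eq : actionSubalgebra F S V = S := S.range_val
  rw [← S_eq]
  refine of_not_satisfiesStdPoly fun hS => hx (LinearMap.ext fun v => ?_)
  have stdPoly_eq : (stdPoly _ (fun k => (⟨x k, hxS k⟩ : S)) : S) = stdPoly _ x :=
    stdPoly_map S.val.toRingHom _ _
  rw [← stdPoly_eq]
  exact hS _ v

end IsFullBlockTriangular

theorem exists_units_conj_toMatrix'_eq_toMatrix {m : Type*} [Fintype m] [DecidableEq m]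
    (b : Module.Basis m F (m → F)) : ∃ Q : (Matrix m m F)ˣ, ∀ f : Module.End F (m → F),
      (Q : Matrix m m F) * LinearMap.toMatrix' f * ((Q⁻¹ : (Matrix m m F)ˣ) : Matrix m m F) =
        LinearMap.toMatrix b b f := by
  let e := Pi.basisFun F m
  refine ⟨⟨b.toMatrix e, e.toMatrix b, b.toMatrix_mul_toMatrix_flip e,
    e.toMatrix_mul_toMatrix_flip b⟩, fun f => ?_⟩
  rw [← basis_toMatrix_mul_linearMap_toMatrix_mul_basis_toMatrix b e b e f,
    LinearMap.toMatrix_eq_toMatrix']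
  rfl

end BlockUpperTriangular

/-- Main theorem: a subalgebra of `M_n(F)` not satisfying `s_{2n-2}` is conjugate to a
full block upper triangular matrix algebra `E_{(ℓ₁,…,ℓ_t)}(F)`. -/
theorem main_classification (F : Type*) [Field F] (n : ℕ)
    (A : Subalgebra F (Matrix (Fin n) (Fin n) F))
    (hA : ∃ x : Fin (2 * n - 2) → Matrix (Fin n) (Fin n) F,
      (∀ k, x k ∈ A) ∧ stdPoly (2 * n - 2) x ≠ 0) :
    ∃ (t : ℕ) (_ : 0 < t) (ℓ : Fin t → ℕ), (∀ i, 0 < ℓ i) ∧ (∑ i, ℓ i) = n ∧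
      ∃ Q : (Matrix (Fin n) (Fin n) F)ˣ,
        (fun a => (Q : Matrix (Fin n) (Fin n) F) * a *
            ((Q⁻¹ : (Matrix (Fin n) (Fin n) F)ˣ) : Matrix (Fin n) (Fin n) F)) ''
          (A : Set (Matrix (Fin n) (Fin n) F)) =
        {M : Matrix (Fin n) (Fin n) F | BlockUT ℓ M} := by
  obtain ⟨x, hxA, hx⟩ := hA
  let φ : Module.End F (Fin n → F) ≃ₐ[F] Matrix (Fin n) (Fin n) F := LinearMap.toMatrixAlgEquiv'
  have stdPoly_ne_zero : stdPoly (2 * n - 2) (fun k => φ.symm (x k)) ≠ 0 := by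
    have := stdPoly_map φ.symm.toRingEquiv.toRingHom _ x
    exact this ▸ φ.symm.map_ne_zero_iff.2 hx
  obtain ⟨t, ht, ℓ, ℓ_pos, ℓ_sum, b, mem_iff_blockUT⟩ :=
    IsFullBlockTriangular.of_stdPoly_ne_zero (S := A.comap φ.toAlgHom) (Module.finrank_fin_fun F)
      (fun k => by simpa using hxA k) stdPoly_ne_zero
  obtain ⟨Q, conj_eq⟩ := exists_units_conj_toMatrix'_eq_toMatrix b
  refine ⟨t, ht, ℓ, ℓ_pos, ℓ_sum, Q, Set.ext fun M => ?_⟩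
  calc M ∈ (fun a => (Q : Matrix (Fin n) (Fin n) F) * a *
          ((Q⁻¹ : (Matrix (Fin n) (Fin n) F)ˣ) : Matrix (Fin n) (Fin n) F)) ''
        (A : Set (Matrix (Fin n) (Fin n) F))
      ↔ ∃ f, φ f ∈ A ∧ LinearMap.toMatrix b b f = M :=
        φ.surjective.exists.trans (exists_congr fun f => and_congr_right' (by rw [← conj_eq]; rfl))
    _ ↔ ∃ f, BlockUT ℓ (LinearMap.toMatrix b b f) ∧ LinearMap.toMatrix b b f = M :=
        exists_congr fun f => and_congr_left' (mem_iff_blockUT f)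
    _ ↔ BlockUT ℓ M :=
        (LinearMap.toMatrix b b).surjective.exists.symm.trans exists_eq_right
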